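/- Let φ : G' → G be a square covering of simple graphs with G' a connected median graph. Let ν' be an edge-coloring of G' and o' an orientation of the edges of G' that both factor through φ: there are an edge-coloring ν and an orientation o of G with ν'(e) = ν(φ(e)) for every edge e of G', and φ maps the source of each directed edge of G' to the source of its image under o. Then for any two vertices ũ, ũ' of G' with φ(ũ) = φ(ũ'), there exists a graph automorphism f of G' with f(ũ) = ũ' that preserves the colors and the directions of all edges. Consequently, if G is finite and (G', o') is a directed median graph, then the principal filters F_{o'}(ũ, G'), for ũ a vertex of G', fall into at most |V(G)| classes up to isomorphism of the induced subgraphs preserving edge directions and colors. -/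

import Mathlib

/-- The interval `I(u,v)` in a graph. -/
def gInterval {V : Type} (G : SimpleGraph V) (u v : V) : Set V :=
  {w | G.dist u w + G.dist w v = G.dist u v}

/-- A median graph: a connected graph in which every triple of vertices has a
unique median. -/
def IsMedianGraph {V : Type} (G : SimpleGraph V) : Prop :=
  G.Connected ∧ ∀ x y z : V, ∃! m : V,
    m ∈ gInterval G x y ∧ m ∈ gInterval G y z ∧ m ∈ gInterval G z x

/-- A graph covering map: a locally bijective homomorphism of simple graphs. -/
def IsGraphCovering {V' V : Type} (G' : SimpleGraph V') (G : SimpleGraph V)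
    (φ : V' → V) : Prop :=
  (∀ u v : V', G'.Adj u v → G.Adj (φ u) (φ v)) ∧
  ∀ v' : V', Set.BijOn φ (G'.neighborSet v') (G.neighborSet (φ v'))

/-- A square covering: a covering map along which 4-cycles of `G` lift to 4-cycles
of `G'`. -/
def IsSquareCovering {V' V : Type} (G' : SimpleGraph V') (G : SimpleGraph V)
    (φ : V' → V) : Prop :=
  IsGraphCovering G' G φ ∧
  ∀ w₀ w₁ w₂ w₃ : V, G.Adj w₀ w₁ → G.Adj w₁ w₂ → G.Adj w₂ w₃ → G.Adj w₃ w₀ →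
    w₀ ≠ w₂ → w₁ ≠ w₃ →
    ∀ v₀' v₁' v₃' : V', φ v₀' = w₀ →
      G'.Adj v₀' v₁' → φ v₁' = w₁ → G'.Adj v₀' v₃' → φ v₃' = w₃ →
      ∃ v₂' : V', G'.Adj v₁' v₂' ∧ G'.Adj v₃' v₂' ∧ φ v₂' = w₂

/-- An orientation of the edges of a graph: each edge gets exactly one direction. -/
structure GraphOrientation {V : Type} (G : SimpleGraph V) where
  dir : V → V → Prop
  adj_of_dir : ∀ u v, dir u v → G.Adj u v
  total : ∀ u v, G.Adj u v → dir u v ∨ dir v u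
  asymm : ∀ u v, dir u v → ¬ dir v u

/-- An orientation is admissible (defines a directed median graph) if opposite
edges of every 4-cycle receive the same direction. -/
def IsAdmissible {V : Type} (G : SimpleGraph V) (o : GraphOrientation G) : Prop :=
  ∀ a b c d : V, G.Adj a b → G.Adj b c → G.Adj c d → G.Adj d a → a ≠ c → b ≠ d →
    (o.dir a b ↔ o.dir d c)

/-- The principal filter `F_o(v,G)` of a vertex `v` with respect to the partial
order generated by the directed edges. -/
def oFilter {V : Type} {G : SimpleGraph V} (o : GraphOrientation G) (v : V) : Set V :=
  {x | Relation.ReflTransGen o.dir v x}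

/-- The principal filters of `u₁` and `u₂` are isomorphic as colored directed
graphs: there is a bijection between them preserving adjacency, edge directions
and edge colors. -/
def FilterIso {V' C : Type} (G' : SimpleGraph V') (o' : GraphOrientation G')
    (ν' : V' → V' → C) (u₁ u₂ : V') : Prop :=
  ∃ g : V' → V', Set.BijOn g (oFilter o' u₁) (oFilter o' u₂) ∧
    ∀ x ∈ oFilter o' u₁, ∀ y ∈ oFilter o' u₁,
      (G'.Adj x y ↔ G'.Adj (g x) (g y)) ∧
      (o'.dir x y ↔ o'.dir (g x) (g y)) ∧
      (G'.Adj x y → ν' (g x) (g y) = ν' x y)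

/-!
A square covering has unique lifts not only of edges but of the far corner of every square, even of
a degenerate one. Hence every homomorphism from a modular graph lifts: extend the lift along
geodesics from the base vertex. Two geodesic predecessors of a vertex have, by the quadrangle
condition, a common predecessor, so the squares along which two geodesics differ make the result
independent of the geodesic; bipartiteness ensures that every edge lies on a geodesic from the base
vertex. Lifting the covering map along itself with a prescribed value at one vertex gives the deck
transformations, and these preserve whatever is pulled back along the covering.
-/

open SimpleGraph

/-- A modular graph: a connected graph in which every triple of vertices has a median, not
necessarily a unique one. Homomorphisms from such graphs lift along square coverings. -/
def IsModularGraph {W : Type} (M : SimpleGraph W) : Prop :=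
  M.Connected ∧ ∀ x y z : W, ∃ m : W,
    m ∈ gInterval M x y ∧ m ∈ gInterval M y z ∧ m ∈ gInterval M z x

theorem IsMedianGraph.isModularGraph {W : Type} {M : SimpleGraph W} (hM : IsMedianGraph M) :
    IsModularGraph M :=
  ⟨hM.1, fun x y z => (hM.2 x y z).exists⟩

namespace IsModularGraph

variable {W : Type} {M : SimpleGraph W} {u a b v : W}

theorem exists_dist_add_eq (hM : IsModularGraph M) (x y z : W) :
    ∃ m, M.dist x m + M.dist m y = M.dist x y ∧ M.dist y m + M.dist m z = M.dist y z ∧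
      M.dist x m + M.dist m z = M.dist x z := by
  obtain ⟨m, hxy, hyz, hzx⟩ := hM.2 x y z
  refine ⟨m, hxy, hyz, ?_⟩
  simpa only [gInterval, Set.mem_ofPred_eq, M.dist_comm, add_comm] using hzx

theorem dist_ne_of_adj (hM : IsModularGraph M) (u : W) (hab : M.Adj a b) :
    M.dist u a ≠ M.dist u b := by
  intro heq
  obtain ⟨m, hua, hmab, hub⟩ := hM.exists_dist_add_eq u a b
  have hab_one : M.dist a b = 1 := dist_eq_one_iff_adj.mpr hab
  rw [M.dist_comm (u := a) (v := m)] at hmab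
  omega

theorem dist_eq_add_one_or (hM : IsModularGraph M) (u : W) (hab : M.Adj a b) :
    M.dist u b = M.dist u a + 1 ∨ M.dist u a = M.dist u b + 1 := by
  have hne := hM.dist_ne_of_adj u hab
  have hstep := hab.diff_dist_adj (u := u)
  omega

theorem dist_eq_two_of_adj_of_adj (hM : IsModularGraph M) (hav : M.Adj a v) (hbv : M.Adj b v)
    (hab : a ≠ b) : M.dist a b = 2 := by
  have hlt : 1 < M.dist a b := hM.1.one_lt_dist_of_ne_of_not_adj hab fun hadj =>
    hM.dist_ne_of_adj v hadj <| by
      rw [dist_eq_one_iff_adj.mpr hav.symm, dist_eq_one_iff_adj.mpr hbv.symm]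
  have hle : M.dist a b ≤ 2 := dist_le (.cons hav (.cons hbv.symm .nil))
  omega

theorem quadrangle_condition (hM : IsModularGraph M) (hav : M.Adj a v) (hbv : M.Adj b v)
    (hab : a ≠ b) (hua : M.dist u v = M.dist u a + 1) (hub : M.dist u v = M.dist u b + 1) :
    ∃ c, M.Adj c a ∧ M.Adj c b ∧ M.dist u a = M.dist u c + 1 ∧ M.dist u b = M.dist u c + 1 := by
  have hab_two := hM.dist_eq_two_of_adj_of_adj hav hbv hab
  obtain ⟨c, hca, hcab, hcb⟩ := hM.exists_dist_add_eq u a b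
  rw [M.dist_comm (u := a) (v := c)] at hcab
  exact ⟨c, dist_eq_one_iff_adj.mp (by omega), dist_eq_one_iff_adj.mp (by omega),
    by omega, by omega⟩

end IsModularGraph

theorem exists_adj_dist_add_one_eq {W : Type*} {M : SimpleGraph W} (hM : M.Connected) {u v : W}
    (huv : u ≠ v) : ∃ a, M.Adj a v ∧ M.dist u v = M.dist u a + 1 := by
  obtain ⟨p, hp⟩ := hM.exists_walk_length_eq_dist v u
  cases p with
  | nil => exact absurd rfl huv
  | @cons _ a _ hva q =>
    refine ⟨a, hva.symm, ?_⟩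
    have hq : M.dist u a ≤ q.length := M.dist_comm (u := a) ▸ dist_le q
    have hstep := hva.diff_dist_adj (u := u)
    rw [Walk.length_cons, M.dist_comm] at hp
    omega

namespace IsGraphCovering

variable {V' V : Type} {G' : SimpleGraph V'} {G : SimpleGraph V} {φ : V' → V}

theorem eq_of_adj_of_map_eq (hφ : IsGraphCovering G' G φ) {v a b : V'} (ha : G'.Adj v a)
    (hb : G'.Adj v b) (hab : φ a = φ b) : a = b :=
  (hφ.2 v).injOn ha hb hab

theorem exists_adj_map_eq (hφ : IsGraphCovering G' G φ) {y : V'} {t : V}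
    (ht : G.Adj (φ y) t) : ∃ z, G'.Adj y z ∧ φ z = t :=
  (hφ.2 y).surjOn ht

theorem lift_unique (hφ : IsGraphCovering G' G φ) {W : Type*} {M : SimpleGraph W}
    (hM : M.Connected) {f g : M →g G'} (hfg : ∀ x, φ (f x) = φ (g x)) {u : W}
    (hu : f u = g u) : f = g := by
  ext x
  obtain ⟨p⟩ := hM u x
  induction p with
  | nil => exact hu
  | cons hadj _ ih =>
    exact ih (hφ.eq_of_adj_of_map_eq (f.map_adj hadj) (hu ▸ g.map_adj hadj) (hfg _))

end IsGraphCovering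

/-- `GeodesicLift M G' φ ψ u w x y` says that `y` is the end of a walk of `G'` from `w` which lifts
the `ψ`-image of some geodesic of `M` from `u` to `x` along `φ`. -/
inductive GeodesicLift {W V' V : Type*} (M : SimpleGraph W) (G' : SimpleGraph V') (φ : V' → V)
    (ψ : W → V) (u : W) (w : V') : W → V' → Prop
  | base : GeodesicLift M G' φ ψ u w u w
  | step {x x' : W} {y y' : V'} : GeodesicLift M G' φ ψ u w x y → M.Adj x x' →
      M.dist u x' = M.dist u x + 1 → G'.Adj y y' → φ y' = ψ x' → GeodesicLift M G' φ ψ u w x' y'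

namespace GeodesicLift

theorem map_eq {W V' V : Type*} {M : SimpleGraph W} {G' : SimpleGraph V'} {φ : V' → V}
    {ψ : W → V} {u x : W} {w y : V'} (hw : φ w = ψ u) (h : GeodesicLift M G' φ ψ u w x y) :
    φ y = ψ x := by
  cases h with
  | base => exact hw
  | step _ _ _ _ hy => exact hy

variable {V' V : Type} {G' : SimpleGraph V'} {G : SimpleGraph V} {φ : V' → V}

theorem exists_step (hφ : IsGraphCovering G' G φ) {W : Type*} {M : SimpleGraph W} {ψ : M →g G}
    {u x x' : W} {w y : V'} (hw : φ w = ψ u) (h : GeodesicLift M G' φ ψ u w x y)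
    (hadj : M.Adj x x') (hdist : M.dist u x' = M.dist u x + 1) :
    ∃ y', G'.Adj y y' ∧ GeodesicLift M G' φ ψ u w x' y' := by
  have hψ : G.Adj (φ y) (ψ x') := h.map_eq hw ▸ ψ.map_adj hadj
  obtain ⟨y', hyy', hy'⟩ := hφ.exists_adj_map_eq hψ
  exact ⟨y', hyy', h.step hadj hdist hyy' hy'⟩

theorem exists_of_connected (hφ : IsGraphCovering G' G φ) {W : Type*} {M : SimpleGraph W}
    (hM : M.Connected) {ψ : M →g G} {u : W} {w : V'} (hw : φ w = ψ u) (x : W) :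
    ∃ y, GeodesicLift M G' φ ψ u w x y := by
  induction hn : M.dist u x generalizing x with
  | zero =>
    obtain rfl := hM.dist_eq_zero_iff.mp hn
    exact ⟨w, base⟩
  | succ n ih =>
    have hne : u ≠ x := by
      rintro rfl
      simp at hn
    obtain ⟨a, hax, ha⟩ := exists_adj_dist_add_one_eq hM hne
    obtain ⟨y, hy⟩ := ih a (by omega)
    obtain ⟨y', -, hy'⟩ := exists_step hφ hw hy hax ha
    exact ⟨y', hy'⟩

end GeodesicLift

namespace IsSquareCovering

variable {V' V : Type} {G' : SimpleGraph V'} {G : SimpleGraph V} {φ : V' → V}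

theorem eq_of_adj_adj_of_map_eq (hφ : IsSquareCovering G' G φ) {y a b z z' : V'}
    (hya : G'.Adj y a) (haz : G'.Adj a z) (hyb : G'.Adj y b) (hbz' : G'.Adj b z')
    (hzz' : φ z = φ z') : z = z' := by
  have hadj := hφ.1.1
  by_cases hab : φ a = φ b
  · obtain rfl := hφ.1.eq_of_adj_of_map_eq hya hyb hab
    exact hφ.1.eq_of_adj_of_map_eq haz hbz' hzz'
  by_cases hyz : φ y = φ z
  · have hz : y = z := hφ.1.eq_of_adj_of_map_eq hya.symm haz hyz
    have hz' : y = z' := hφ.1.eq_of_adj_of_map_eq hyb.symm hbz' (hyz.trans hzz')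
    exact hz.symm.trans hz'
  obtain ⟨t, hat, hbt, ht⟩ := hφ.2 (φ y) (φ a) (φ z) (φ b) (hadj _ _ hya) (hadj _ _ haz)
    (hzz' ▸ (hadj _ _ hbz').symm) (hadj _ _ hyb).symm hyz hab y a b rfl hya rfl hyb rfl
  calc
    z = t := hφ.1.eq_of_adj_of_map_eq haz hat ht.symm
    _ = z' := hφ.1.eq_of_adj_of_map_eq hbt hbz' (ht.trans hzz')

variable {W : Type} {M : SimpleGraph W}

theorem geodesicLift_unique (hφ : IsSquareCovering G' G φ) (hM : IsModularGraph M) {ψ : M →g G}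
    {u x : W} {w y z : V'} (hw : φ w = ψ u) (hy : GeodesicLift M G' φ ψ u w x y)
    (hz : GeodesicLift M G' φ ψ u w x z) : y = z := by
  induction hn : M.dist u x generalizing x y z with
  | zero =>
    cases hy with
    | base =>
      cases hz with
      | base => rfl
      | step => omega
    | step => omega
  | succ n ih =>
    cases hy with
    | base => simp at hn
    | @step a _ ya _ hya hax hua hyay hφy =>
    cases hz with
    | base => simp at hn
    | @step b _ yb _ hyb hbx hub hybz hφz =>
    have hyz : φ y = φ z := hφy.trans hφz.symm
    by_cases hab : a = b
    · subst hab
      obtain rfl : ya = yb := ih hya hyb (by omega)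
      exact hφ.1.eq_of_adj_of_map_eq hyay hybz hyz
    · obtain ⟨c, hca, hcb, huca, hucb⟩ := hM.quadrangle_condition hax hbx hab hua hub
      obtain ⟨yc, hyc⟩ := GeodesicLift.exists_of_connected hφ.1 hM.1 hw c
      obtain ⟨ya', hycya, hya'⟩ := hyc.exists_step hφ.1 hw hca huca
      obtain ⟨yb', hycyb, hyb'⟩ := hyc.exists_step hφ.1 hw hcb hucb
      obtain rfl : ya = ya' := ih hya hya' (by omega)
      obtain rfl : yb = yb' := ih hyb hyb' (by omega)
      exact hφ.eq_of_adj_adj_of_map_eq hycya hyay hycyb hybz hyz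

theorem exists_lift (hφ : IsSquareCovering G' G φ) (hM : IsModularGraph M) (ψ : M →g G) {u : W}
    {w : V'} (hw : φ w = ψ u) : ∃ f : M →g G', f u = w ∧ ∀ x, φ (f x) = ψ x := by
  choose f hf using GeodesicLift.exists_of_connected hφ.1 hM.1 hw
  have adj_of_dist {x y : W} (hxy : M.Adj x y) (hdist : M.dist u y = M.dist u x + 1) :
      G'.Adj (f x) (f y) := by
    obtain ⟨y', hadj, hy'⟩ := (hf x).exists_step hφ.1 hw hxy hdist
    rwa [hφ.geodesicLift_unique hM hw (hf y) hy']
  have map_adj {x y : W} (hxy : M.Adj x y) : G'.Adj (f x) (f y) :=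
    (hM.dist_eq_add_one_or u hxy).elim (adj_of_dist hxy) fun h => (adj_of_dist hxy.symm h).symm
  exact ⟨⟨f, map_adj⟩, hφ.geodesicLift_unique hM hw (hf u) .base, fun x => (hf x).map_eq hw⟩

theorem exists_deck_transformation (hφ : IsSquareCovering G' G φ) (hG' : IsModularGraph G')
    {u₁ u₂ : V'} (hu : φ u₁ = φ u₂) : ∃ f : G' ≃g G', f u₁ = u₂ ∧ ∀ x, φ (f x) = φ x := by
  let ψ : G' →g G := ⟨φ, hφ.1.1 _ _⟩
  obtain ⟨f, hfu, hf⟩ := hφ.exists_lift hG' ψ (u := u₁) hu.symm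
  obtain ⟨g, hgu, hg⟩ := hφ.exists_lift hG' ψ (u := u₂) hu
  have hgf : g.comp f = .id := hφ.1.lift_unique hG'.1 (u := u₁)
    (fun x => (hg (f x)).trans (hf x)) (by simp [hfu, hgu])
  have hfg : f.comp g = .id := hφ.1.lift_unique hG'.1 (u := u₂)
    (fun x => (hf (g x)).trans (hg x)) (by simp [hfu, hgu])
  let e : V' ≃ V' := ⟨f, g, DFunLike.congr_fun hgf, DFunLike.congr_fun hfg⟩
  have adj_of_map {x y : V'} (h : G'.Adj (f x) (f y)) : G'.Adj x y := by
    have hadj : G'.Adj (g.comp f x) (g.comp f y) := g.map_adj h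
    rwa [hgf] at hadj
  exact ⟨⟨e, ⟨adj_of_map, f.map_adj⟩⟩, hfu, hf⟩

end IsSquareCovering

theorem GraphOrientation.dir_iff_adj_and_dir_map {V' V : Type} {G' : SimpleGraph V'}
    {G : SimpleGraph V} {φ : V' → V} {o' : GraphOrientation G'} {o : GraphOrientation G}
    (ho : ∀ u v, o'.dir u v → o.dir (φ u) (φ v)) (u v : V') :
    o'.dir u v ↔ G'.Adj u v ∧ o.dir (φ u) (φ v) :=
  ⟨fun h => ⟨o'.adj_of_dir u v h, ho u v h⟩, fun ⟨hadj, hdir⟩ =>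
    (o'.total u v hadj).resolve_right fun h => o.asymm _ _ hdir (ho v u h)⟩

theorem reflTransGen_relIso_iff {α β : Type*} {r : α → α → Prop} {s : β → β → Prop}
    (e : r ≃r s) {a b : α} :
    Relation.ReflTransGen s (e a) (e b) ↔ Relation.ReflTransGen r a b := by
  refine ⟨fun h => ?_, Relation.ReflTransGen.lift e (fun _ _ => e.map_rel_iff.mpr) a b⟩
  simpa [Function.onFun] using
    Relation.ReflTransGen.lift e.symm (fun _ _ => e.symm.map_rel_iff.mpr) _ _ h

theorem bijOn_oFilter {V₁ V₂ : Type} {G₁ : SimpleGraph V₁} {G₂ : SimpleGraph V₂}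
    {o₁ : GraphOrientation G₁} {o₂ : GraphOrientation G₂} (e : o₁.dir ≃r o₂.dir) (u : V₁) :
    Set.BijOn e (oFilter o₁ u) (oFilter o₂ (e u)) :=
  e.toEquiv.bijOn fun _ => reflTransGen_relIso_iff e

theorem FilterIso.of_iso {V C : Type} {G : SimpleGraph V} {o : GraphOrientation G}
    {ν : V → V → C} (f : G ≃g G) (hdir : ∀ u v, o.dir u v ↔ o.dir (f u) (f v))
    (hν : ∀ u v, G.Adj u v → ν (f u) (f v) = ν u v) (u : V) : FilterIso G o ν u (f u) :=
  ⟨f, bijOn_oFilter ⟨f.toEquiv, (hdir _ _).symm⟩ u,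
    fun x _ y _ => ⟨f.map_adj_iff.symm, hdir x y, hν x y⟩⟩

theorem covering_filter_regularity_general {V' V C : Type} {G' : SimpleGraph V'}
    {G : SimpleGraph V} {φ : V' → V} (hφ : IsSquareCovering G' G φ) (hG' : IsModularGraph G')
    {o' : GraphOrientation G'} {ν' : V' → V' → C} {o : GraphOrientation G} {ν : V → V → C}
    (hν : ∀ u v : V', G'.Adj u v → ν' u v = ν (φ u) (φ v))
    (ho : ∀ u v : V', o'.dir u v → o.dir (φ u) (φ v)) {u₁ u₂ : V'} (hu : φ u₁ = φ u₂) :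
    (∃ f : V' → V', Function.Bijective f ∧ f u₁ = u₂ ∧
      (∀ u v : V', G'.Adj u v ↔ G'.Adj (f u) (f v)) ∧
      (∀ u v : V', o'.dir u v ↔ o'.dir (f u) (f v)) ∧
      (∀ u v : V', G'.Adj u v → ν' (f u) (f v) = ν' u v)) ∧
    FilterIso G' o' ν' u₁ u₂ := by
  obtain ⟨f, rfl, hf⟩ := hφ.exists_deck_transformation hG' hu
  have hdir (u v : V') : o'.dir u v ↔ o'.dir (f u) (f v) := by
    simp only [GraphOrientation.dir_iff_adj_and_dir_map ho, hf, f.map_adj_iff]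
  have hcol (u v : V') (huv : G'.Adj u v) : ν' (f u) (f v) = ν' u v := by
    rw [hν u v huv, hν _ _ (f.map_adj_iff.mpr huv), hf, hf]
  exact ⟨⟨f, f.bijective, rfl, fun _ _ => f.map_adj_iff.symm, hdir, hcol⟩, .of_iso f hdir hcol u₁⟩

/-- Let `φ : G' → G` be a square covering with `G'` a (connected) median graph, and
let the edge coloring `ν'` and the orientation `o'` of `G'` factor through `φ`
(via a coloring `ν` and an orientation `o` of `G`). Then any two vertices of `G'`
with the same image under `φ` are exchanged by an automorphism of `G'` preserving
the colors and directions of all edges. Consequently, if `G` is finite and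
`(G', o')` is a directed median graph, the principal filters of `(G', o')` fall
into at most `|V(G)|` classes up to isomorphism preserving directions and colors. -/
theorem covering_filter_regularity {V' V C : Type}
    (G' : SimpleGraph V') (G : SimpleGraph V) (φ : V' → V)
    (hφ : IsSquareCovering G' G φ) (hmed : IsMedianGraph G')
    (o' : GraphOrientation G') (ν' : V' → V' → C)
    (o : GraphOrientation G) (ν : V → V → C)
    (hν : ∀ u v : V', G'.Adj u v → ν' u v = ν (φ u) (φ v))
    (ho : ∀ u v : V', o'.dir u v → o.dir (φ u) (φ v)) :
    (∀ u₁ u₂ : V', φ u₁ = φ u₂ →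
      ∃ f : V' → V', Function.Bijective f ∧ f u₁ = u₂ ∧
        (∀ u v : V', G'.Adj u v ↔ G'.Adj (f u) (f v)) ∧
        (∀ u v : V', o'.dir u v ↔ o'.dir (f u) (f v)) ∧
        (∀ u v : V', G'.Adj u v → ν' (f u) (f v) = ν' u v)) ∧
    (Finite V → IsAdmissible G' o' →
      ∃ cl : V' → V, ∀ u₁ u₂ : V', cl u₁ = cl u₂ → FilterIso G' o' ν' u₁ u₂) :=
  have general {u₁ u₂ : V'} (hu : φ u₁ = φ u₂) :=
    covering_filter_regularity_general hφ hmed.isModularGraph hν ho hu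
  ⟨fun _ _ hu => (general hu).1, fun _ _ => ⟨φ, fun _ _ hu => (general hu).2⟩⟩
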